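/- arXiv:1912.08252 — 3 statements merged into one kernel-verified Lean document; each statement's English description precedes it below -/
import Mathlib

section
/- Let F be a field, n ≥ 1, and equip F[x_0,…,x_{n-1}] with the lexicographic monomial order in which x_{n-1} ≻ ⋯ ≻ x_0. Let I be an ideal and let B be a finite lex Gröbner basis of I, meaning B ⊆ I, B generates I, and for every nonzero f ∈ I there is a nonzero b ∈ B whose leading monomial divides the leading monomial of f. Then for every j ≤ n, B ∩ R_j has the Gröbner-basis divisibility property for the elimination ideal I ∩ R_j: for every nonzero f ∈ I with f ∈ R_j, there exists a nonzero b ∈ B with b ∈ R_j whose leading monomial divides the leading monomial of f. -/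
/-!
If `f ∈ I ∩ R_j` and `b ∈ B` has leading monomial dividing that of `f`, then the leading monomial
of `b` involves only `x_0, …, x_{j-1}`. In the lex order with `x_{n-1} ≻ ⋯ ≻ x_0` this forces every
monomial of `b` to involve only these variables (`inRj_of_isLeadMonomial`), so `b ∈ R_j`.
-/

/-- `InRj j p` : the polynomial `p` lies in `R_j`, i.e. involves only the
variables `x_0, …, x_{j-1}`. -/
def InRj {n : ℕ} {F : Type*} [CommSemiring F] (j : ℕ) (p : MvPolynomial (Fin n) F) : Prop :=
  ∀ m ∈ p.support, ∀ i : Fin n, j ≤ (i : ℕ) → m i = 0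

/-- The lexicographic order on exponent vectors in which `x_{n-1} ≻ ⋯ ≻ x_0`. -/
def LexLT {n : ℕ} (a b : Fin n →₀ ℕ) : Prop :=
  ∃ i : Fin n, a i < b i ∧ ∀ k : Fin n, i < k → a k = b k

/-- `m` is the lex leading monomial (leading exponent vector) of `p`. -/
def IsLeadMonomial {n : ℕ} {F : Type*} [CommSemiring F] (p : MvPolynomial (Fin n) F)
    (m : Fin n →₀ ℕ) : Prop :=
  m ∈ p.support ∧ ∀ m' ∈ p.support, m' = m ∨ LexLT m' m

/-- `B` is a (finite) lex Gröbner basis of the ideal `I`: `B ⊆ I`, `B`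
generates `I`, and for every nonzero `f ∈ I` there is a nonzero `b ∈ B`
whose leading monomial divides the leading monomial of `f`. -/
def IsLexGroebnerBasis {n : ℕ} {F : Type*} [Field F]
    (B : Finset (MvPolynomial (Fin n) F)) (I : Ideal (MvPolynomial (Fin n) F)) : Prop :=
  (↑B : Set (MvPolynomial (Fin n) F)) ⊆ I ∧
  Ideal.span (↑B : Set (MvPolynomial (Fin n) F)) = I ∧
  ∀ f ∈ I, f ≠ 0 → ∃ b ∈ B, b ≠ 0 ∧ ∃ mb mf : Fin n →₀ ℕ,
    IsLeadMonomial b mb ∧ IsLeadMonomial f mf ∧ ∀ i : Fin n, mb i ≤ mf i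

/-- The elimination property of the lex order: since `x_0, …, x_{j-1}` are the smallest variables,
a polynomial whose leading monomial involves only these lies in `R_j`. -/
theorem inRj_of_isLeadMonomial {n : ℕ} {F : Type*} [CommSemiring F] {j : ℕ}
    {p : MvPolynomial (Fin n) F} {m : Fin n →₀ ℕ} (hm : IsLeadMonomial p m)
    (h0 : ∀ i : Fin n, j ≤ (i : ℕ) → m i = 0) : InRj j p := by
  intro m' hm' i hi
  rcases hm.2 m' hm' with rfl | ⟨k, hk, hgt⟩
  · exact h0 i hi
  · -- `m k > m' k ≥ 0` forces `k < j ≤ i`, so `m'` and `m` agree at `i`.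
    have hkj : (k : ℕ) < j := by
      by_contra! h
      have := h0 k h
      omega
    rw [hgt i (Fin.lt_def.2 (by omega)), h0 i hi]

/-- Elimination: if `B` is a lex Gröbner basis of `I` then, for every `j ≤ n`,
`B ∩ R_j` has the Gröbner-basis divisibility property for the elimination
ideal `I ∩ R_j`. -/
theorem lexGroebner_elimination_divisibility {F : Type*} [Field F] {n : ℕ} (hn : 1 ≤ n)
    (I : Ideal (MvPolynomial (Fin n) F)) (B : Finset (MvPolynomial (Fin n) F))
    (hB : IsLexGroebnerBasis B I) (j : ℕ) (hj : j ≤ n) :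
    ∀ f ∈ I, f ≠ 0 → InRj j f → ∃ b ∈ B, b ≠ 0 ∧ InRj j b ∧
      ∃ mb mf : Fin n →₀ ℕ,
        IsLeadMonomial b mb ∧ IsLeadMonomial f mf ∧ ∀ i : Fin n, mb i ≤ mf i := by
  intro f hf hf0 hfj
  obtain ⟨b, hb, hb0, mb, mf, hmb, hmf, hdvd⟩ := hB.2.2 f hf hf0
  refine ⟨b, hb, hb0, inRj_of_isLeadMonomial hmb fun i hi => ?_, mb, mf, hmb, hmf, hdvd⟩
  exact Nat.le_zero.1 ((hdvd i).trans (hfj mf hmf.1 i hi).le)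
end

section
/- Let F be a field, n ≥ 1, and equip F[x_0,…,x_{n-1}] with the lexicographic monomial order in which x_{n-1} ≻ ⋯ ≻ x_0. Let I be an ideal with finite lex Gröbner basis B. Then for every j ≤ n, every f ∈ I that lies in R_j (involves only variables of index < j) belongs to the ideal of F[x_0,…,x_{n-1}] generated by B ∩ R_j; in particular B ∩ R_j generates the elimination ideal I ∩ R_j. -/
theorem LexLT.wf (n : ℕ) : WellFounded (LexLT (n := n)) := by
  have h : WellFounded (Pi.Lex (fun a b : Fin n => a > b) (fun {_} (x y : ℕ) => x < y)) :=
    Pi.Lex.wellFounded _ (fun _ => wellFounded_lt)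
  refine Subrelation.wf ?_ (InvImage.wf (fun (m : Fin n →₀ ℕ) => (m : Fin n → ℕ)) h)
  rintro a b ⟨i, hi, hk⟩
  exact ⟨i, fun k hki => hk k hki, hi⟩

theorem LexLT.irrefl {n : ℕ} (a : Fin n →₀ ℕ) : ¬ LexLT a a :=
  fun ⟨_, h, _⟩ => lt_irrefl _ h

theorem LexLT.trans {n : ℕ} {a b c : Fin n →₀ ℕ} (hab : LexLT a b) (hbc : LexLT b c) :
    LexLT a c := by
  obtain ⟨i, hi, hi'⟩ := hab
  obtain ⟨k, hk, hk'⟩ := hbc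
  rcases lt_trichotomy i k with h | h | h
  · exact ⟨k, by rw [hi' k h]; exact hk, fun l hl => (hi' l (h.trans hl)).trans (hk' l hl)⟩
  · subst h
    exact ⟨i, hi.trans hk, fun l hl => (hi' l hl).trans (hk' l hl)⟩
  · exact ⟨i, by rw [← hk' i h]; exact hi, fun l hl => (hi' l hl).trans (hk' l (h.trans hl))⟩

theorem LexLT.add_left {n : ℕ} {a b : Fin n →₀ ℕ} (s : Fin n →₀ ℕ) (h : LexLT a b) :
    LexLT (s + a) (s + b) := by
  obtain ⟨i, hi, hk⟩ := h
  exact ⟨i, by simpa using hi, fun k hik => by simpa using hk k hik⟩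

theorem IsLeadMonomial.unique {n : ℕ} {F : Type*} [CommSemiring F] {p : MvPolynomial (Fin n) F}
    {m m' : Fin n →₀ ℕ} (h : IsLeadMonomial p m) (h' : IsLeadMonomial p m') : m = m' := by
  rcases h'.2 m h.1 with e | e
  · exact e
  rcases h.2 m' h'.1 with e' | e'
  · exact e'.symm
  · exact (LexLT.irrefl _ (e.trans e')).elim

/-- The elimination property of the lex order: membership in `R_j` can be read off from the
leading monomial alone. -/
theorem InRj.of_leadMonomial {n : ℕ} {F : Type*} [CommSemiring F] {j : ℕ}
    {b : MvPolynomial (Fin n) F} {mb : Fin n →₀ ℕ} (h : IsLeadMonomial b mb)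
    (h0 : ∀ i : Fin n, j ≤ (i : ℕ) → mb i = 0) : InRj j b := by
  intro m hm i hi
  rcases h.2 m hm with rfl | ⟨k, hk, hk'⟩
  · exact h0 i hi
  · have hkj : (k : ℕ) < j := by
      by_contra hc
      have := h0 k (not_lt.mp hc)
      omega
    rw [hk' i (Fin.lt_def.mpr (hkj.trans_le hi)), h0 i hi]

/-- One step of the division algorithm inside `R_j`: cancelling the leading term of `f` by a
monomial multiple of `b` keeps `f` in `R_j` and leaves only strictly smaller monomials. -/
theorem reduce_step {n : ℕ} {F : Type*} [Field F] {j : ℕ} {f b : MvPolynomial (Fin n) F}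
    {m mb : Fin n →₀ ℕ} (hf : IsLeadMonomial f m) (hb : IsLeadMonomial b mb)
    (hle : mb ≤ m) (hfj : InRj j f) (hbj : InRj j b) :
    ∃ q : MvPolynomial (Fin n) F, InRj j (f - q * b) ∧
      ∀ m' ∈ (f - q * b).support, LexLT m' m := by
  have hcb : b.coeff mb ≠ 0 := MvPolynomial.mem_support_iff.mp hb.1
  have hsm : (m - mb) + mb = m := tsub_add_cancel_of_le hle
  generalize m - mb = s at hsm
  set q := MvPolynomial.monomial s (f.coeff m / b.coeff mb) with hq
  have key : ∀ m' ∈ (f - q * b).support,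
      m' ∈ f.support ∨ ∃ u ∈ b.support, m' = s + u := by
    intro m' hm'
    by_contra! hc
    obtain ⟨h1, h2⟩ := hc
    rw [MvPolynomial.mem_support_iff, MvPolynomial.coeff_sub, hq,
      MvPolynomial.coeff_monomial_mul', MvPolynomial.notMem_support_iff.mp h1] at hm'
    split_ifs at hm' with hs
    · refine h2 (m' - s) ?_ (add_tsub_cancel_of_le hs).symm
      rw [MvPolynomial.mem_support_iff]
      rintro h0
      simp [h0] at hm'
    · simp at hm'
  refine ⟨q, fun m' hm' i hi => ?_, fun m' hm' => ?_⟩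
  · rcases key m' hm' with h | ⟨u, hu, rfl⟩
    · exact hfj m' h i hi
    · have h1 := hfj m hf.1 i hi
      have h2 := hbj u hu i hi
      rw [← hsm, Finsupp.add_apply] at h1
      rw [Finsupp.add_apply]
      omega
  · have hne : m' ≠ m := by
      rintro rfl
      rw [MvPolynomial.mem_support_iff, MvPolynomial.coeff_sub, hq] at hm'
      have hc := MvPolynomial.coeff_monomial_mul mb s (f.coeff m' / b.coeff mb) b
      rw [hsm, div_mul_cancel₀ _ hcb] at hc
      rw [hc, sub_self] at hm'
      exact hm' rfl
    rcases key m' hm' with h | ⟨u, hu, rfl⟩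
    · exact (hf.2 m' h).resolve_left hne
    · rcases hb.2 u hu with rfl | h
      · exact (hne hsm).elim
      · exact hsm ▸ h.add_left s

theorem mem_span_of_leadMonomial {F : Type*} [Field F] {n : ℕ}
    {I : Ideal (MvPolynomial (Fin n) F)} {B : Finset (MvPolynomial (Fin n) F)}
    (hB : IsLexGroebnerBasis B I) (j : ℕ) (m : Fin n →₀ ℕ) :
    ∀ f ∈ I, InRj j f → IsLeadMonomial f m →
      f ∈ Ideal.span {b : MvPolynomial (Fin n) F | b ∈ B ∧ InRj j b} := by
  induction m using (LexLT.wf n).induction with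
  | _ m ih =>
  intro f hfI hfj hfm
  have hf0 : f ≠ 0 := by
    rintro rfl
    simpa using hfm.1
  obtain ⟨b, hbB, -, mb, mf, hb, hmf, hle⟩ := hB.2.2 f hfI hf0
  obtain rfl := hfm.unique hmf
  have hbj : InRj j b := .of_leadMonomial hb fun i hi =>
    Nat.eq_zero_of_le_zero (hfj m hfm.1 i hi ▸ hle i)
  obtain ⟨q, hgj, hlt⟩ := reduce_step hfm hb hle hfj hbj
  have hqb : q * b ∈ Ideal.span {b : MvPolynomial (Fin n) F | b ∈ B ∧ InRj j b} :=
    Ideal.mul_mem_left _ _ (Ideal.subset_span ⟨hbB, hbj⟩)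
  have hgI : f - q * b ∈ I := I.sub_mem hfI (I.mul_mem_left _ (hB.1 hbB))
  rw [← sub_add_cancel f (q * b)]
  refine Ideal.add_mem _ ?_ hqb
  by_cases hg : f - q * b = 0
  · rw [hg]
    exact Ideal.zero_mem _
  -- The Gröbner basis property also supplies the leading monomial of the remainder.
  · obtain ⟨-, -, -, -, mg, -, hmg, -⟩ := hB.2.2 _ hgI hg
    exact ih mg (hlt mg hmg.1) _ hgI hgj hmg

/-- Elimination: if `B` is a lex Gröbner basis of `I` then every `f ∈ I` lying
in `R_j` belongs to the ideal generated by `B ∩ R_j`; in particular `B ∩ R_j`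
generates the elimination ideal `I ∩ R_j`. -/
theorem lexGroebner_elimination_span {F : Type*} [Field F] {n : ℕ} (hn : 1 ≤ n)
    (I : Ideal (MvPolynomial (Fin n) F)) (B : Finset (MvPolynomial (Fin n) F))
    (hB : IsLexGroebnerBasis B I) (j : ℕ) (hj : j ≤ n) :
    (∀ f ∈ I, InRj j f → f ∈ Ideal.span {b : MvPolynomial (Fin n) F | b ∈ B ∧ InRj j b}) ∧
    {f : MvPolynomial (Fin n) F | f ∈ I ∧ InRj j f} =
      {f : MvPolynomial (Fin n) F |
        f ∈ Ideal.span {b : MvPolynomial (Fin n) F | b ∈ B ∧ InRj j b} ∧ InRj j f} := by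
  have main : ∀ f ∈ I, InRj j f →
      f ∈ Ideal.span {b : MvPolynomial (Fin n) F | b ∈ B ∧ InRj j b} := by
    intro f hfI hfj
    by_cases hf0 : f = 0
    · rw [hf0]
      exact Ideal.zero_mem _
    · obtain ⟨-, -, -, -, m, -, hm, -⟩ := hB.2.2 f hfI hf0
      exact mem_span_of_leadMonomial hB j m f hfI hfj hm
  refine ⟨main, Set.ext fun f => ⟨fun h => ⟨main f h.1 h.2, h.2⟩, fun h => ⟨?_, h.2⟩⟩⟩
  have hle : Ideal.span {b : MvPolynomial (Fin n) F | b ∈ B ∧ InRj j b} ≤ I :=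
    Ideal.span_le.mpr fun b hb => hB.1 hb.1
  exact hle h.1
end

section
/- Let F be an algebraically closed field, n ≥ 1, and equip F[x_0,…,x_{n-1}] with the lexicographic monomial order in which x_{n-1} ≻ ⋯ ≻ x_0. Let I be an ideal with finite lex Gröbner basis B, fix j with j + 1 ≤ n, and let a ∈ F^j be a common zero of every element of B ∩ R_j. Let C := (B ∩ R_{j+1}) \ R_j be nonempty, let b₁ be the element of C with lex-smallest leading monomial, let d₁ := deg_{x_j}(b₁) ≥ 1, and assume the coefficient of X^{d₁} in the univariate polynomial b̂₁ (obtained by substituting a_i for x_i, i < j, and X for x_j) is nonzero. Then there exists α ∈ F such that the point obtained by extending a with x_j := α is a common zero of every element of B ∩ R_{j+1}. -/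
/-- `bHat a b` is the univariate polynomial `b̂ ∈ F[X]` obtained from `b` by
substituting `x_i := a_i` for `i < j` and `X` for the remaining variables
(in particular `X` for `x_j`). -/
noncomputable def bHat {F : Type*} [Field F] {n : ℕ} (j : ℕ) (a : Fin j → F)
    (b : MvPolynomial (Fin n) F) : Polynomial F :=
  MvPolynomial.eval₂ Polynomial.C
    (fun i : Fin n => if h : (i : ℕ) < j then Polynomial.C (a ⟨i, h⟩) else Polynomial.X) b

open MvPolynomial

/-! ### The rings `R_j` and the lex order -/

theorem inRj_iff_mem_supported {n : ℕ} {F : Type*} [CommSemiring F] {j : ℕ}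
    {p : MvPolynomial (Fin n) F} :
    InRj j p ↔ p ∈ supported F {i : Fin n | (i : ℕ) < j} := by
  rw [mem_supported]
  constructor
  · intro h i hi
    obtain ⟨m, hm, him⟩ := (mem_vars_iff_mem_support i).1 hi
    by_contra hc
    exact (Finsupp.mem_support_iff.1 him) (h m hm i (not_lt.1 hc))
  · intro h m hm i hi
    by_contra hc
    have : i ∈ p.vars := (mem_vars_iff_mem_support i).2 ⟨m, hm, Finsupp.mem_support_iff.2 hc⟩
    exact absurd (h this) (not_lt.2 hi)

theorem InRj.mono {n : ℕ} {F : Type*} [CommSemiring F] {j k : ℕ} (hjk : j ≤ k)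
    {p : MvPolynomial (Fin n) F} (h : InRj j p) : InRj k p :=
  fun m hm i hi => h m hm i (hjk.trans hi)

theorem wellFounded_lexLT {n : ℕ} : WellFounded (LexLT (n := n)) := by
  refine Subrelation.wf (r := Finsupp.Lex (fun a b : Fin n => b < a) (fun a b : ℕ => a < b)) ?_
    (Finsupp.Lex.wellFounded' (fun _ => Nat.not_lt_zero _) wellFounded_lt wellFounded_lt)
  rintro a b ⟨i, hi, hk⟩
  exact ⟨i, fun k hk' => hk k hk', hi⟩

/-- On exponent vectors of `R_{j+1}`, the lex order compares the exponent of `x_j` first. -/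
theorem LexLT.restrict {n : ℕ} {a b : Fin n →₀ ℕ} (h : LexLT a b) (j : Fin n)
    (hb : ∀ i, j < i → b i = 0) : (∀ i, j < i → a i = 0) ∧ a j ≤ b j := by
  obtain ⟨i, hi, hk⟩ := h
  have hij : i ≤ j := by
    by_contra hc
    have := hb i (not_le.1 hc)
    omega
  refine ⟨fun k hjk => (hk k (hij.trans_lt hjk)).trans (hb k hjk), ?_⟩
  rcases hij.eq_or_lt with rfl | h
  · exact hi.le
  · exact (hk j h).le

/-! ### Leading coefficients in `x_j` and substitution of `a` -/

/-- The part of `p` of exact degree `d` in `x_j` is split off as `x_j ^ d * c` with `c ∈ R_j`. -/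
theorem exists_leadCoeff_decomp {n : ℕ} {F : Type*} [Field F] (j : Fin n)
    {p : MvPolynomial (Fin n) F} (hp : InRj ((j : ℕ) + 1) p) {d : ℕ} (hd : 0 < d)
    (hpd : degreeOf j p ≤ d) :
    ∃ c r : MvPolynomial (Fin n) F, p = X j ^ d * c + r ∧ InRj (j : ℕ) c ∧
      InRj ((j : ℕ) + 1) r ∧ degreeOf j r < d := by
  have hle : ∀ m ∈ (p.modMonomial (Finsupp.single j d)).support,
      m ∈ p.support ∧ m j < d := by
    intro m hm
    have hns : ¬ Finsupp.single j d ≤ m := fun hc =>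
      (mem_support_iff.1 hm) (coeff_modMonomial_of_le _ hc)
    refine ⟨?_, ?_⟩
    · rw [mem_support_iff, ← coeff_modMonomial_of_not_le p hns]
      exact mem_support_iff.1 hm
    · rwa [Finsupp.single_le_iff, not_le] at hns
  refine ⟨p.divMonomial (Finsupp.single j d), p.modMonomial (Finsupp.single j d), ?_, ?_, ?_, ?_⟩
  · rw [X_pow_eq_monomial]
    exact (divMonomial_add_modMonomial p _).symm
  · intro m hm i hi
    have hm' : Finsupp.single j d + m ∈ p.support := by
      rw [mem_support_iff, ← coeff_divMonomial]
      exact mem_support_iff.1 hm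
    rcases (Fin.le_def.2 hi).eq_or_lt with rfl | hlt
    · have := (monomial_le_degreeOf j hm').trans hpd
      simp only [Finsupp.add_apply, Finsupp.single_eq_same] at this
      omega
    · have := hp _ hm' i hlt
      simp only [Finsupp.add_apply] at this
      omega
  · exact fun m hm => hp m (hle m hm).1
  · exact (degreeOf_lt_iff hd).2 fun m hm => (hle m hm).2

theorem natDegree_bHat_le {n : ℕ} {F : Type*} [Field F] (j : Fin n) (a : Fin (j : ℕ) → F)
    {p : MvPolynomial (Fin n) F} (hp : InRj ((j : ℕ) + 1) p) :
    (bHat (j : ℕ) a p).natDegree ≤ degreeOf j p := by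
  rw [bHat, eval₂_eq']
  refine Polynomial.natDegree_sum_le_of_forall_le _ _ fun m hm => ?_
  refine (Polynomial.natDegree_C_mul_le _ _).trans ((Polynomial.natDegree_prod_le _ _).trans ?_)
  rw [Finset.sum_eq_single j]
  · refine (Polynomial.natDegree_pow_le).trans ?_
    simpa using monomial_le_degreeOf j hm
  · intro i _ hij
    by_cases h : (i : ℕ) < j
    · rw [dif_pos h, ← Polynomial.C_pow, Polynomial.natDegree_C]
    · have hlt : (j : ℕ) + 1 ≤ i := by
        have : (i : ℕ) ≠ j := fun hc => hij (Fin.ext hc)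
        omega
      rw [hp m hm i hlt]
      simp
  · simp

theorem eval_eq_bHat_eval {n : ℕ} {F : Type*} [Field F] (j : Fin n) (a : Fin (j : ℕ) → F)
    {p : MvPolynomial (Fin n) F} (hp : InRj ((j : ℕ) + 1) p) (x : Fin n → F)
    (hx : ∀ i : Fin n, ∀ h : (i : ℕ) < j, x i = a ⟨i, h⟩) :
    eval x p = (bHat (j : ℕ) a p).eval (x j) := by
  rw [bHat, eval₂_eq', eval_eq', Polynomial.eval_finsetSum]
  refine Finset.sum_congr rfl fun m hm => ?_
  rw [Polynomial.eval_mul, Polynomial.eval_C, Polynomial.eval_prod]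
  congr 1
  refine Finset.prod_congr rfl fun i _ => ?_
  rcases lt_trichotomy (i : ℕ) j with h | h | h
  · simp [h, hx i h]
  · obtain rfl := Fin.ext h
    simp
  · simp [hp m hm i h]

/-- Substitution of `a` turns an element of `R_j` into the constant given by its value at `a`. -/
theorem bHat_eq_C {n : ℕ} {F : Type*} [Field F] (j : Fin n) (a : Fin (j : ℕ) → F)
    {p : MvPolynomial (Fin n) F} (hp : InRj (j : ℕ) p) (x : Fin n → F)
    (hx : ∀ i : Fin n, ∀ h : (i : ℕ) < j, x i = a ⟨i, h⟩) :
    bHat (j : ℕ) a p = Polynomial.C (eval x p) := by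
  rw [bHat, eval₂_eq', eval_eq', map_sum]
  refine Finset.sum_congr rfl fun m hm => ?_
  rw [map_mul, map_prod]
  congr 1
  refine Finset.prod_congr rfl fun i _ => ?_
  by_cases h : (i : ℕ) < j
  · simp [h, hx i h]
  · simp [hp m hm i (not_lt.1 h)]

theorem coeff_bHat_of_decomp {n : ℕ} {F : Type*} [Field F] (j : Fin n) (a : Fin (j : ℕ) → F)
    {p c r : MvPolynomial (Fin n) F} {d : ℕ} (h : p = X j ^ d * c + r) (hc : InRj (j : ℕ) c)
    (hr : InRj ((j : ℕ) + 1) r) (hrd : degreeOf j r < d) (x : Fin n → F)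
    (hx : ∀ i : Fin n, ∀ h : (i : ℕ) < j, x i = a ⟨i, h⟩) :
    (bHat (j : ℕ) a p).coeff d = eval x c := by
  have h1 : bHat (j : ℕ) a p = Polynomial.X ^ d * bHat (j : ℕ) a c + bHat (j : ℕ) a r := by
    subst h
    simp [bHat, eval₂_add, eval₂_mul, eval₂_pow]
  rw [h1, bHat_eq_C j a hc x hx, Polynomial.coeff_add,
    Polynomial.coeff_eq_zero_of_natDegree_lt ((natDegree_bHat_le j a hr).trans_lt hrd)]
  simp

/-! ### Lex reduction in low degree -/

/-- One lex reduction step: cancelling the leading term of `f` against a multiple of `b` leaves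
only lex-smaller monomials. -/
theorem lexLT_of_mem_support_reduce {n : ℕ} {F : Type*} [Field F]
    {f b : MvPolynomial (Fin n) F} {mf mb : Fin n →₀ ℕ} (hf : IsLeadMonomial f mf)
    (hb : IsLeadMonomial b mb) (hle : ∀ i, mb i ≤ mf i) :
    ∀ m ∈ (f - monomial (mf - mb) (coeff mf f / coeff mb b) * b).support, LexLT m mf := by
  classical
  intro m hm
  have hadd : mf - mb + mb = mf := tsub_add_cancel_of_le hle
  have hne : m ≠ mf := by
    rintro rfl
    apply mem_support_iff.1 hm
    have h0 : coeff mb b ≠ 0 := mem_support_iff.1 hb.1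
    have h1 : coeff m (monomial (m - mb) (coeff m f / coeff mb b) * b) = coeff m f := by
      have h2 := coeff_monomial_mul mb (m - mb) (coeff m f / coeff mb b) b
      rwa [hadd, div_mul_cancel₀ _ h0] at h2
    rw [coeff_sub, h1, sub_self]
  rcases Finset.mem_union.1 (support_sub _ _ _ hm) with h | h
  · exact (hf.2 m h).resolve_left hne
  · obtain ⟨u, hu, v, hv, rfl⟩ := Finset.mem_add.1 (support_mul _ _ h)
    obtain rfl := Finset.mem_singleton.1 (support_monomial_subset hu)
    rcases hb.2 v hv with rfl | ⟨i, hi, hk⟩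
    · exact absurd hadd hne
    · refine ⟨i, ?_, fun k hik => ?_⟩
      · have := hle i
        simp only [Finsupp.add_apply, Finsupp.tsub_apply]
        omega
      · have := hle k
        have := hk k hik
        simp only [Finsupp.add_apply, Finsupp.tsub_apply]
        omega

/-- Elements of `I ∩ R_{j+1}` of degree less than `d` in `x_j` are reduced to zero by `B ∩ R_j`
when every element of `B ∩ R_{j+1}` of smaller degree lies in `R_j`, so they vanish wherever
`B ∩ R_j` does. -/
theorem eval_eq_zero_of_lead_lt {n : ℕ} {F : Type*} [Field F]
    {I : Ideal (MvPolynomial (Fin n) F)} {B : Finset (MvPolynomial (Fin n) F)}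
    (hB : IsLexGroebnerBasis B I) (j : Fin n) (d : ℕ) (x : Fin n → F)
    (hx : ∀ b ∈ B, InRj (j : ℕ) b → eval x b = 0)
    (hd : ∀ b ∈ B, InRj ((j : ℕ) + 1) b → ∀ m, IsLeadMonomial b m → m j < d → InRj (j : ℕ) b)
    (mf : Fin n →₀ ℕ) :
    ∀ f ∈ I, IsLeadMonomial f mf → (∀ i, j < i → mf i = 0) → mf j < d → eval x f = 0 := by
  induction mf using wellFounded_lexLT.induction with
  | _ mf ih =>
  intro f hfI hf hz hlt
  have hf0 : f ≠ 0 := by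
    rintro rfl
    simpa using hf.1
  obtain ⟨b, hbB, -, mb, mf', hb, hf', hle⟩ := hB.2.2 f hfI hf0
  -- Leading monomials are unique, as the lex order is asymmetric.
  have hmm : mf' = mf := by
    rcases hf.2 _ hf'.1 with h | ⟨i, hi, hk⟩
    · exact h
    rcases hf'.2 _ hf.1 with h | ⟨i', hi', hk'⟩
    · exact h.symm
    rcases lt_trichotomy i i' with h | h | h
    · have := hk i' h
      omega
    · subst h
      omega
    · have := hk' i h
      omega
  subst hmm
  have hbz : ∀ i, j < i → mb i = 0 := fun i hi => Nat.le_zero.1 ((hle i).trans (hz i hi).le)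
  -- Elimination property of lex: a leading monomial in `R_{j+1}` forces `b ∈ R_{j+1}`.
  have hbR : InRj ((j : ℕ) + 1) b := by
    intro m hm i hi
    rcases hb.2 m hm with rfl | h
    · exact hbz i hi
    · exact (h.restrict j hbz).1 i hi
  have hb0 : eval x b = 0 := hx b hbB (hd b hbB hbR mb hb ((hle j).trans_lt hlt))
  have hsupp := lexLT_of_mem_support_reduce hf hb hle
  set g := f - monomial (mf' - mb) (coeff mf' f / coeff mb b) * b with hg
  have hgI : g ∈ I := I.sub_mem hfI (I.mul_mem_left _ (hB.1 hbB))
  have hge : eval x g = eval x f := by simp [hg, hb0]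
  rw [← hge]
  by_cases hg0 : g = 0
  · simp [hg0]
  -- The Gröbner basis property also supplies the existence of a leading monomial.
  obtain ⟨-, -, -, -, mg, -, hmg, -⟩ := hB.2.2 g hgI hg0
  have hlex := hsupp mg hmg.1
  obtain ⟨h1, h2⟩ := hlex.restrict j hz
  exact ih mg hlex g hgI hmg h1 (h2.trans_lt hlt)

/-! ### Pseudo-division -/

/-- Pseudo-division by `b₁` in the variable `x_j`: an ideal containing `b₁` vanishes on `R_{j+1}`
at a zero of `b₁` where the leading coefficient of `b₁` does not vanish, as soon as its elements
of degree less than that of `b₁` do. -/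
theorem eval_eq_zero_of_root {n : ℕ} {F : Type*} [Field F] {I : Ideal (MvPolynomial (Fin n) F)}
    (j : Fin n) {d : ℕ} (x : Fin n → F)
    (hlow : ∀ f ∈ I, InRj ((j : ℕ) + 1) f → degreeOf j f < d → eval x f = 0)
    {b₁ c₁ r₁ : MvPolynomial (Fin n) F} (hbI : b₁ ∈ I) (hdec : b₁ = X j ^ d * c₁ + r₁)
    (hc₁ : InRj (j : ℕ) c₁) (hr₁ : InRj ((j : ℕ) + 1) r₁) (hrd : degreeOf j r₁ < d)
    (hroot : eval x b₁ = 0) (hlc : eval x c₁ ≠ 0) (D : ℕ) :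
    ∀ f ∈ I, InRj ((j : ℕ) + 1) f → degreeOf j f = D → eval x f = 0 := by
  have hdeg : ∀ c : MvPolynomial (Fin n) F, InRj (j : ℕ) c → degreeOf j c = 0 := fun c hc =>
    Nat.le_zero.1 (degreeOf_le_iff.2 fun m hm => (hc m hm j le_rfl).le)
  induction D using Nat.strong_induction_on with
  | _ D ih =>
  intro f hfI hfR hfD
  by_cases hDd : D < d
  · exact hlow f hfI hfR (hfD.trans_lt hDd)
  have hDd' : d ≤ D := not_lt.1 hDd
  have hD : 0 < D := by omega
  obtain ⟨c, r, hf, hc, hr, hrD⟩ := exists_leadCoeff_decomp j hfR hD hfD.le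
  have hpow : (X j : MvPolynomial (Fin n) F) ^ (D - d) * X j ^ d = X j ^ D := by
    rw [← pow_add, Nat.sub_add_cancel hDd']
  -- The terms of degree `D` in `x_j` cancel in `c₁ * f - x_j ^ (D - d) * c * b₁`.
  have hcancel : c₁ * f - X j ^ (D - d) * c * b₁ = c₁ * r - c * X j ^ (D - d) * r₁ := by
    rw [hf, hdec, ← hpow]
    ring
  set g := c₁ * f - X j ^ (D - d) * c * b₁ with hg
  have hgI : g ∈ I := I.sub_mem (I.mul_mem_left _ hfI) (I.mul_mem_left _ hbI)
  have hgR : InRj ((j : ℕ) + 1) g := by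
    rw [hcancel, inRj_iff_mem_supported]
    refine Subalgebra.sub_mem _ (Subalgebra.mul_mem _ ?_ ?_)
      (Subalgebra.mul_mem _ (Subalgebra.mul_mem _ ?_ (Subalgebra.pow_mem _ ?_ _)) ?_)
    · exact inRj_iff_mem_supported.1 (hc₁.mono (Nat.le_succ _))
    · exact inRj_iff_mem_supported.1 hr
    · exact inRj_iff_mem_supported.1 (hc.mono (Nat.le_succ _))
    · exact Algebra.subset_adjoin ⟨j, Nat.lt_succ_self _, rfl⟩
    · exact inRj_iff_mem_supported.1 hr₁
  have hgD : degreeOf j g < D := by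
    rw [hcancel]
    refine (degreeOf_sub_le _ _ _).trans_lt (max_lt ?_ ?_)
    · have := degreeOf_mul_le j c₁ r
      have := hdeg c₁ hc₁
      omega
    · have := degreeOf_mul_le j (c * X j ^ (D - d)) r₁
      have := degreeOf_mul_le j c (X j ^ (D - d))
      have := hdeg c hc
      have : degreeOf j ((X j : MvPolynomial (Fin n) F) ^ (D - d)) = D - d := by
        rw [X_pow_eq_monomial, degreeOf_monomial_eq _ _ one_ne_zero, Finsupp.single_eq_same]
      omega
  have hg0 := ih _ hgD g hgI hgR rfl
  have : eval x c₁ * eval x f = 0 := by simpa [hg, hroot] using hg0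
  exact (mul_eq_zero.1 this).resolve_left hlc

/-- Extension over an algebraically closed field: if `a ∈ F^j` is a common
zero of `B ∩ R_j`, `C := (B ∩ R_{j+1}) \ R_j` is nonempty, `b₁ ∈ C` has
lex-smallest leading monomial among `C`, `d₁ := deg_{x_j}(b₁) ≥ 1`, and the
leading coefficient of `b₁` in `x_j` does not vanish at `a`, then there is an
`α ∈ F` extending `a` to a common zero of `B ∩ R_{j+1}`. -/
theorem extension_exists_of_minimal {F : Type*} [Field F] [IsAlgClosed F] {n : ℕ}
    (hn : 1 ≤ n)
    (I : Ideal (MvPolynomial (Fin n) F)) (B : Finset (MvPolynomial (Fin n) F))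
    (hB : IsLexGroebnerBasis B I) (j : ℕ) (hj : j + 1 ≤ n) (a : Fin j → F)
    -- `a` is a common zero of every element of `B ∩ R_j`
    (ha : ∀ x : Fin n → F, (∀ i : Fin n, ∀ h : (i : ℕ) < j, x i = a ⟨i, h⟩) →
      ∀ b ∈ B, InRj j b → MvPolynomial.eval x b = 0)
    (b₁ : MvPolynomial (Fin n) F)
    -- `b₁ ∈ C = (B ∩ R_{j+1}) \ R_j`
    (hb₁ : b₁ ∈ B ∧ InRj (j + 1) b₁ ∧ ¬ InRj j b₁)
    (m₁ : Fin n →₀ ℕ) (hm₁ : IsLeadMonomial b₁ m₁)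
    -- `b₁` has lex-smallest leading monomial among the elements of `C`
    (hmin : ∀ b : MvPolynomial (Fin n) F, (b ∈ B ∧ InRj (j + 1) b ∧ ¬ InRj j b) →
      ∀ m : Fin n →₀ ℕ, IsLeadMonomial b m → ¬ LexLT m m₁)
    -- `d₁ := deg_{x_j}(b₁) ≥ 1`
    (hd₁ : 1 ≤ MvPolynomial.degreeOf (⟨j, hj⟩ : Fin n) b₁)
    -- the leading coefficient of `b₁` in `x_j` does not vanish at `a`
    (hlc : (bHat j a b₁).coeff (MvPolynomial.degreeOf (⟨j, hj⟩ : Fin n) b₁) ≠ 0) :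
    ∃ α : F, ∀ x : Fin n → F, (∀ i : Fin n, ∀ h : (i : ℕ) < j, x i = a ⟨i, h⟩) →
      x ⟨j, hj⟩ = α →
      ∀ b ∈ B, InRj (j + 1) b → MvPolynomial.eval x b = 0 := by
  obtain ⟨hbB, hbR, -⟩ := hb₁
  have hbI : b₁ ∈ I := hB.1 hbB
  obtain ⟨c₁, r₁, hdec, hc₁, hr₁, hrd⟩ :=
    exists_leadCoeff_decomp (⟨j, hj⟩ : Fin n) hbR hd₁ le_rfl
  have hdegne : (bHat j a b₁).degree ≠ 0 := by
    intro h0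
    have := Polynomial.le_natDegree_of_ne_zero hlc
    rw [Polynomial.natDegree_eq_zero_iff_degree_le_zero.2 h0.le] at this
    omega
  obtain ⟨α, hα⟩ := IsAlgClosed.exists_root _ hdegne
  refine ⟨α, fun x hx hxα b hbB' hbR' => ?_⟩
  have hroot : eval x b₁ = 0 := by
    rw [eval_eq_bHat_eval ⟨j, hj⟩ a hbR x hx, hxα]
    exact hα
  have hlc' : eval x c₁ ≠ 0 := by
    rwa [← coeff_bHat_of_decomp ⟨j, hj⟩ a hdec hc₁ hr₁ hrd x hx]
  have hm₁z : ∀ i, (⟨j, hj⟩ : Fin n) < i → m₁ i = 0 := fun i hi => hbR m₁ hm₁.1 i hi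
  have hm₁j : degreeOf (⟨j, hj⟩ : Fin n) b₁ ≤ m₁ ⟨j, hj⟩ := by
    refine degreeOf_le_iff.2 fun m hm => ?_
    rcases hm₁.2 m hm with rfl | h
    · exact le_rfl
    · exact (h.restrict _ hm₁z).2
  refine eval_eq_zero_of_root ⟨j, hj⟩ x ?_ hbI hdec hc₁ hr₁ hrd hroot hlc' _ b (hB.1 hbB') hbR' rfl
  intro f hfI hfR hfd
  by_cases hf0 : f = 0
  · simp [hf0]
  obtain ⟨-, -, -, -, mf, -, hmf, -⟩ := hB.2.2 f hfI hf0
  refine eval_eq_zero_of_lead_lt hB ⟨j, hj⟩ (degreeOf (⟨j, hj⟩ : Fin n) b₁) x (ha x hx) ?_ mf f hfI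
    hmf (fun i hi => hfR mf hmf.1 i hi) ((monomial_le_degreeOf _ hmf.1).trans_lt hfd)
  -- An element of `C` of smaller degree in `x_j` would have a lex-smaller leading monomial.
  intro b' hb' hbR'' m hm hlt
  by_contra hcon
  refine hmin b' ⟨hb', hbR'', hcon⟩ m hm ⟨⟨j, hj⟩, hlt.trans_le hm₁j, fun k hk => ?_⟩
  rw [hm₁z k hk]
  exact hbR'' m hm.1 k hk
end
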